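/- In F_p with p = 3697, n = 24, k = 154, and primitive root g = 5, let X_i = {g^{24a+i} : 0 ≤ a < 154}. Then for all i, j, l modulo 24: (X_i + X_j) ∩ X_l = ∅ holds if and only if (up to permutation of the cycle) j ≡ i and l ≡ i + 12 (mod 24). -/

import Mathlib

open Pointwise

theorem aux_prime : Nat.Prime 3697 := by norm_num

theorem aux_five : (5 : ZMod 3697) ≠ 0 := by decide +kernel

theorem aux_order : orderOf (5 : ZMod 3697) = 3696 := by
  have := Fact.mk aux_prime
  apply orderOf_eq_of_pow_and_pow_div_prime (by norm_num)
  · have : ((5 ^ 3696 : ℕ) : ZMod 3697) = ((1 : ℕ) : ZMod 3697) :=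
      (ZMod.natCast_eq_natCast_iff' _ _ _).2 (by decide +kernel)
    exact_mod_cast this
  · intro q hq hd
    have hq' : q ∈ Nat.primeFactors 3696 := by simp [hq, hd]
    have h2 : Nat.primeFactors 3696 ⊆ {2, 3, 7, 11} := by
      intro r hr
      have hp := Nat.prime_of_mem_primeFactors hr
      have hdv := Nat.dvd_of_mem_primeFactors hr
      have h : r ∣ 2 ^ 4 * 3 * 7 * 11 := by simpa using hdv
      simp only [Finset.mem_insert, Finset.mem_singleton]
      rcases (hp.dvd_mul).1 h with h | h
      · rcases (hp.dvd_mul).1 h with h | h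
        · rcases (hp.dvd_mul).1 h with h | h
          · left; exact (Nat.prime_dvd_prime_iff_eq hp Nat.prime_two).1 (hp.dvd_of_dvd_pow h)
          · right; left; exact (Nat.prime_dvd_prime_iff_eq hp Nat.prime_three).1 h
        · right; right; left; exact (Nat.prime_dvd_prime_iff_eq hp (by norm_num)).1 h
      · right; right; right; exact (Nat.prime_dvd_prime_iff_eq hp (by norm_num)).1 h
    have h3 := h2 hq'
    have key : ∀ r ∈ ({2, 3, 7, 11} : Finset ℕ), ¬ (5 ^ (3696 / r) % 3697 = 1 % 3697) := by
      decide +kernel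
    intro h
    apply key q h3
    apply (ZMod.natCast_eq_natCast_iff' _ _ _).1
    exact_mod_cast h

theorem aux_mem (z : ZMod 3697) (m : ℕ) :
    (∃ a < 154, z = (5 : ZMod 3697) ^ (24 * a + m)) ↔ z ^ 154 = (5 ^ 154) ^ m := by
  have := Fact.mk aux_prime
  have ho := aux_order
  have h1 : (5 : ZMod 3697) ^ 3696 = 1 := ho ▸ pow_orderOf_eq_one _
  have h5 : (5 : ZMod 3697) ≠ 0 := aux_five
  constructor
  · rintro ⟨a, -, rfl⟩
    have : (24 * a + m) * 154 = 3696 * a + 154 * m := by ring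
    rw [← pow_mul, ← pow_mul, this, pow_add, pow_mul, h1, one_pow, one_mul]
  · intro h
    have hm : (5 : ZMod 3697) ^ m ≠ 0 := pow_ne_zero _ h5
    have hz : z ≠ 0 := by
      rintro rfl
      rw [zero_pow (by norm_num)] at h
      exact pow_ne_zero m (pow_ne_zero 154 h5) h.symm
    set u : (ZMod 3697)ˣ := Units.mk0 5 h5 with hu
    have hou : orderOf u = 3696 := by
      rw [← orderOf_units, hu]; exact ho
    have hcard : Nat.card (ZMod 3697)ˣ = 3696 := by
      rw [Nat.card_eq_fintype_card, ZMod.card_units]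
    have htop : Subgroup.zpowers u = ⊤ := by
      apply Subgroup.eq_top_of_card_eq
      rw [Nat.card_zpowers, hou, hcard]
    have hmem : Units.mk0 (z / 5 ^ m) (div_ne_zero hz hm) ∈ Subgroup.zpowers u := by
      rw [htop]; trivial
    rw [mem_zpowers_iff_mem_range_orderOf, hou] at hmem
    obtain ⟨k, hk, hk2⟩ := Finset.mem_image.1 hmem
    have hk3 : (5 : ZMod 3697) ^ k = z / 5 ^ m := by
      have := congrArg Units.val hk2
      simpa [hu] using this
    have hpow : (5 : ZMod 3697) ^ (k * 154) = 1 := by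
      rw [pow_mul, hk3, div_pow, h, ← pow_mul, ← pow_mul, mul_comm m]
      exact div_self (pow_ne_zero _ h5)
    have hdvd := orderOf_dvd_of_pow_eq_one hpow
    rw [ho] at hdvd
    have hk' := Finset.mem_range.1 hk
    refine ⟨k / 24, by omega, ?_⟩
    have : 24 * (k / 24) = k := by omega
    rw [this, pow_add, hk3, div_mul_cancel₀ _ hm]

/-- The combinatorial condition after normalising the first index to zero. -/
def auxBad (d e : ℕ) : Bool :=
  (d == 0 && e == 12) || (d == 12 && e == 0) || (d == 12 && e == 12)

theorem aux_comp : ∀ d < 24, ∀ e < 24,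
    ((∃ x < 154, (1 + 5 ^ (24 * x + d) % 3697) ^ 154 % 3697 = 5 ^ (154 * e) % 3697) ↔
      ¬ auxBad d e = true) := by
  decide +kernel

theorem aux_multi0 : ∀ d e : ZMod 24,
    ((∃ m : ZMod 24, ({0, d, e} : Multiset (ZMod 24)) = {m, m, m + 12}) ↔
      auxBad d.val e.val = true) := by
  decide +kernel

theorem aux_multi (i j l : ZMod 24) :
    (∃ m : ZMod 24, ({i, j, l} : Multiset (ZMod 24)) = {m, m, m + 12}) ↔
      auxBad (j - i).val (l - i).val = true := by
  rw [← aux_multi0]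
  constructor
  · rintro ⟨m, hm⟩
    refine ⟨m - i, ?_⟩
    have := congrArg (Multiset.map (· - i)) hm
    simpa [sub_add_eq_add_sub] using this
  · rintro ⟨m, hm⟩
    refine ⟨m + i, ?_⟩
    have := congrArg (Multiset.map (· + i)) hm
    simpa [add_right_comm] using this

theorem aux_w (i j : ℕ) :
    ((5 : ZMod 3697) ^ 154) ^ ((j : ZMod 24) - i).val * (5 ^ 154) ^ i = (5 ^ 154) ^ j := by
  have := Fact.mk aux_prime
  have h1 : ((5 : ZMod 3697) ^ 154) ^ 24 = 1 := by
    have h := pow_orderOf_eq_one (5 : ZMod 3697)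
    rw [aux_order] at h
    rw [← pow_mul]; exact h
  generalize (5 : ZMod 3697) ^ 154 = w at *
  rw [← pow_add, pow_eq_pow_mod _ h1, pow_eq_pow_mod j h1]
  refine congrArg (w ^ ·) ?_
  apply (ZMod.natCast_eq_natCast_iff' _ _ _).1
  simp

theorem aux_cast (d e x : ℕ) :
    ((1 + (5 : ZMod 3697) ^ (24 * x + d)) ^ 154 = (5 ^ 154) ^ e) ↔
    (1 + 5 ^ (24 * x + d) % 3697) ^ 154 % 3697 = 5 ^ (154 * e) % 3697 := by
  rw [← ZMod.natCast_eq_natCast_iff']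
  push_cast [ZMod.natCast_mod]
  rw [pow_mul]

theorem stmt_14
    (X : ℕ → Set (ZMod 3697))
    (hX : ∀ m, X m = {x : ZMod 3697 | ∃ a < 154, x = (5 : ZMod 3697) ^ (24 * a + m)}) :
    ∀ i < 24, ∀ j < 24, ∀ l < 24,
      ((X i + X j) ∩ X l = ∅ ↔
        ∃ m : ZMod 24,
          ({(i : ZMod 24), (j : ZMod 24), (l : ZMod 24)} : Multiset (ZMod 24)) =
            {m, m, m + 12}) := by
  intro i _ j _ l _
  have := Fact.mk aux_prime
  have h5 : (5 : ZMod 3697) ≠ 0 := aux_five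
  have hmem : ∀ m z, z ∈ X m ↔ z ^ 154 = (5 ^ 154) ^ m := by
    intro m z
    rw [hX, ← aux_mem]; rfl
  rw [aux_multi, ← not_iff_not,
    ← aux_comp _ (ZMod.val_lt _) _ (ZMod.val_lt _), ← ne_eq, ← Set.nonempty_iff_ne_empty]
  have hj := aux_w i j
  have hl := aux_w i l
  have hi : ((5 : ZMod 3697) ^ 154) ^ i ≠ 0 := pow_ne_zero _ (pow_ne_zero _ h5)
  simp only [← aux_cast]
  generalize ((j : ZMod 24) - i).val = d at *
  generalize ((l : ZMod 24) - i).val = e at *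
  constructor
  · rintro ⟨z, hz, hzl⟩
    obtain ⟨u, hu, v, hv, rfl⟩ := Set.mem_add.1 hz
    rw [hmem] at hu hv hzl
    have hu0 : u ≠ 0 := by
      rintro rfl
      rw [zero_pow (by norm_num)] at hu
      exact hi hu.symm
    have hvu : (v / u) ^ 154 = (5 ^ 154) ^ d := by
      rw [div_pow, hu, hv, ← hj, mul_div_cancel_right₀ _ hi]
    obtain ⟨x, hx, hx2⟩ := (aux_mem _ _).2 hvu
    refine ⟨x, hx, ?_⟩
    have : 1 + v / u = (u + v) / u := by field_simp
    rw [← hx2, this, div_pow, hzl, hu, ← hl, mul_div_cancel_right₀ _ hi]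
  · rintro ⟨x, hx, h⟩
    have hx2 := (aux_mem _ d).1 ⟨x, hx, rfl⟩
    refine ⟨5 ^ i + 5 ^ (24 * x + d) * 5 ^ i, Set.add_mem_add ?_ ?_, ?_⟩
    · rw [hmem]; exact pow_right_comm _ _ _
    · rw [hmem, mul_pow, hx2, ← hj, pow_right_comm 5 i]
    · rw [hmem, ← one_add_mul, mul_pow, h, ← hl, pow_right_comm 5 i]
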